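/- arXiv:1809.00435 — 3 statements merged into one kernel-verified Lean document; each statement's English description precedes it below -/
import Mathlib

section
/- Let Ω ⊆ ℝⁿ be open, let ψ : ℝⁿ → ℝ be twice continuously differentiable on Ω, let φ : ℝⁿ → ℝ be twice continuously differentiable with compact support contained in Ω, and let η : ℝ → ℝ be continuously differentiable with η(t) > 0 and η′(t) > 0 for all t. Then ∫_Ω φ(x)² · [ 2·Δψ(x)/η(−ψ(x)) + η′(−ψ(x))·|∇ψ(x)|² / η(−ψ(x))² ] dx ≤ 4 ∫_Ω |∇φ(x)|² / η′(−ψ(x)) dx, where Δψ is the Laplacian of ψ, ∇ denotes the gradient, and the integrals are with respect to Lebesgue measure. -/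
open MeasureTheory Metric
open scoped Real Topology ENNReal

noncomputable section

/-- The Euclidean Laplacian `Δψ(x) = Σᵢ ∂²ψ/∂xᵢ²(x)`. -/
def lap (n : ℕ) (ψ : EuclideanSpace ℝ (Fin n) → ℝ) (x : EuclideanSpace ℝ (Fin n)) : ℝ :=
  ∑ i : Fin n, fderiv ℝ (fun y => fderiv ℝ ψ y (EuclideanSpace.single i 1)) x
    (EuclideanSpace.single i 1)

lemma aux_grad (n : ℕ) (f : EuclideanSpace ℝ (Fin n) → ℝ) (x : EuclideanSpace ℝ (Fin n)) :
    ‖gradient f x‖ ^ 2 = ∑ i : Fin n, (fderiv ℝ f x (EuclideanSpace.single i 1)) ^ 2 := by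
  rw [EuclideanSpace.real_norm_sq_eq]
  refine Finset.sum_congr rfl fun i _ => ?_
  have h : fderiv ℝ f x (EuclideanSpace.single i 1)
      = inner ℝ (gradient f x) (EuclideanSpace.single i 1) := by
    rw [gradient, InnerProductSpace.toDual_symm_apply]
  rw [h, EuclideanSpace.inner_single_right]
  simp

lemma aux_alg (p u v w e d : ℝ) (he : 0 < e) (hd : 0 < d) :
    p ^ 2 * (2 * w / e + d * u ^ 2 / e ^ 2) ≤
      4 * (v ^ 2 / d) + 2 * (2 * p * v * (u / e) + p ^ 2 * ((w * e + d * u * u) / e ^ 2)) := by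
  have h : 4 * (v ^ 2 / d) + 2 * (2 * p * v * (u / e) + p ^ 2 * ((w * e + d * u * u) / e ^ 2))
      - p ^ 2 * (2 * w / e + d * u ^ 2 / e ^ 2) = (2 * v * e + p * d * u) ^ 2 / (d * e ^ 2) := by
    field_simp
    ring
  have : 0 ≤ (2 * v * e + p * d * u) ^ 2 / (d * e ^ 2) := by positivity
  linarith

lemma aux_int {n : ℕ} (K Ω : Set (EuclideanSpace ℝ (Fin n))) (hK : IsCompact K)
    (hKΩ : K ⊆ Ω)
    (h : EuclideanSpace ℝ (Fin n) → ℝ) (hc : ∀ x ∈ Ω, ContinuousAt h x)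
    (h0 : ∀ x, x ∉ K → h x = 0) : Integrable h := by
  have h1 : IntegrableOn h K :=
    ContinuousOn.integrableOn_compact hK fun x hx => (hc x (hKΩ hx)).continuousWithinAt
  refine (integrableOn_iff_integrable_of_support_subset ?_).1 h1
  intro x hx
  by_contra hxK
  exact hx (h0 x hxK)

/-- Integration-by-parts inequality:
`∫ φ²[2Δψ/η(−ψ) + η′(−ψ)|∇ψ|²/η(−ψ)²] ≤ 4∫ |∇φ|²/η′(−ψ)`. -/
theorem stmt_7 (n : ℕ) (Ω : Set (EuclideanSpace ℝ (Fin n))) (hΩ : IsOpen Ω)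
    (ψ φ : EuclideanSpace ℝ (Fin n) → ℝ) (η : ℝ → ℝ)
    (hψ : ContDiffOn ℝ 2 ψ Ω)
    (hφ : ContDiff ℝ 2 φ) (hφs : HasCompactSupport φ) (hφΩ : tsupport φ ⊆ Ω)
    (hη : ContDiff ℝ 1 η) (hηpos : ∀ t, 0 < η t) (hη' : ∀ t, 0 < deriv η t) :
    (∫ x in Ω, φ x ^ 2 * (2 * lap n ψ x / η (-ψ x) +
        deriv η (-ψ x) * ‖gradient ψ x‖ ^ 2 / η (-ψ x) ^ 2)) ≤
      4 * ∫ x in Ω, ‖gradient φ x‖ ^ 2 / deriv η (-ψ x) := by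
  have hψa : ∀ x ∈ Ω, ContDiffAt ℝ 2 ψ x := fun x hx => hψ.contDiffAt (hΩ.mem_nhds hx)
  have hψd : ∀ x ∈ Ω, DifferentiableAt ℝ ψ x := fun x hx => (hψa x hx).differentiableAt (by simp)
  have hψc : ∀ x ∈ Ω, ContinuousAt ψ x := fun x hx => (hψa x hx).continuousAt
  have hψ1 : ∀ x ∈ Ω, ∀ v, ContDiffAt ℝ 1 (fun y => fderiv ℝ ψ y v) x := fun x hx v =>
    ((hψa x hx).fderiv_right (m := 1) (by norm_num)).clm_apply contDiffAt_const
  have hψ2 : ∀ x ∈ Ω, ∀ v, ContinuousAt (fun y => fderiv ℝ (fun y => fderiv ℝ ψ y v) y v) x :=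
    fun x hx v => ((((hψ1 x hx v).fderiv_right (m := 0) (by norm_num)).clm_apply
      contDiffAt_const)).continuousAt
  have hηc : Continuous (deriv η) := hη.continuous_deriv (by norm_num)
  have hηd : Differentiable ℝ η := hη.differentiable (by norm_num)
  have hφd : Differentiable ℝ φ := hφ.differentiable (by norm_num)
  have hφ1 : ∀ v, Continuous (fun y => fderiv ℝ φ y v) := fun v =>
    (hφ.continuous_fderiv (by norm_num)).clm_apply continuous_const
  have hηψ : ∀ x ∈ Ω, ContinuousAt (fun y => η (-ψ y)) x := fun x hx =>
    (hη.continuous.continuousAt).comp (hψc x hx).neg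
  have hηψ' : ∀ x ∈ Ω, ContinuousAt (fun y => deriv η (-ψ y)) x := fun x hx =>
    ContinuousAt.comp (f := fun y => -ψ y) (g := deriv η) hηc.continuousAt (hψc x hx).neg
  have hz : ∀ x, x ∉ tsupport φ → φ x = 0 := fun x hx => image_eq_zero_of_notMem_tsupport hx
  set X : Fin n → EuclideanSpace ℝ (Fin n) → ℝ := fun i y =>
    φ y ^ 2 * (fderiv ℝ ψ y (EuclideanSpace.single i 1) / η (-ψ y)) with hX
  have hX0 : ∀ i x, x ∉ tsupport φ → X i =ᶠ[𝓝 x] fun _ => 0 := by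
    intro i x hx
    have : (tsupport φ)ᶜ ∈ 𝓝 x := (isClosed_tsupport φ).isOpen_compl.mem_nhds hx
    filter_upwards [this] with y hy
    simp [hX, hz y hy]
  have hXc : ∀ i, ContDiff ℝ 1 (X i) := by
    intro i
    rw [contDiff_iff_contDiffAt]
    intro x
    by_cases hx : x ∈ tsupport φ
    · have hx' := hφΩ hx
      refine ((hφ.of_le (by norm_num)).contDiffAt.pow 2).mul ((hψ1 x hx' _).div ?_ (hηpos _).ne')
      exact hη.contDiffAt.comp x ((hψa x hx').of_le (by norm_num)).neg
    · exact contDiffAt_const.congr_of_eventuallyEq (hX0 i x hx)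
  have hXs : ∀ i x, x ∉ tsupport φ → fderiv ℝ (X i) x (EuclideanSpace.single i 1) = 0 := by
    intro i x hx
    rw [(hX0 i x hx).fderiv_eq]
    simp
  have hXdi : ∀ i, Integrable (fun x => fderiv ℝ (X i) x (EuclideanSpace.single i 1)) := by
    intro i
    refine aux_int _ Ω hφs hφΩ _ (fun x _ => ?_) (hXs i)
    exact (((hXc i).continuous_fderiv (by norm_num)).clm_apply continuous_const).continuousAt
  have hXi : ∀ i, Integrable (X i) := by
    intro i
    refine aux_int _ Ω hφs hφΩ _ (fun x _ => (hXc i).continuous.continuousAt) ?_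
    intro x hx
    exact (hX0 i x hx).eq_of_nhds
  have hXint : ∀ i, ∫ x in Ω, fderiv ℝ (X i) x (EuclideanSpace.single i 1) = 0 := by
    intro i
    rw [setIntegral_eq_integral_of_forall_compl_eq_zero
      (fun x hx => hXs i x (fun h => hx (hφΩ h)))]
    have := integral_mul_fderiv_eq_neg_fderiv_mul_of_integrable (𝕜 := ℝ)
      (μ := (volume : Measure (EuclideanSpace ℝ (Fin n))))
      (f := fun _ => (1 : ℝ)) (g := X i) (v := EuclideanSpace.single i 1)
      (by simp) (by simpa using hXdi i) (by simpa using hXi i)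
      (fun x _ => by fun_prop) (fun x _ => (hXc i).differentiable (by norm_num) x)
    simpa using this
  have hXf : ∀ i, ∀ x ∈ Ω, fderiv ℝ (X i) x (EuclideanSpace.single i 1) =
      2 * φ x * fderiv ℝ φ x (EuclideanSpace.single i 1) *
        (fderiv ℝ ψ x (EuclideanSpace.single i 1) / η (-ψ x)) +
      φ x ^ 2 * ((fderiv ℝ (fun y => fderiv ℝ ψ y (EuclideanSpace.single i 1)) x
        (EuclideanSpace.single i 1) * η (-ψ x) + deriv η (-ψ x) *
          fderiv ℝ ψ x (EuclideanSpace.single i 1) * fderiv ℝ ψ x (EuclideanSpace.single i 1))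
          / η (-ψ x) ^ 2) := by
    intro i x hx
    have h1 := (hφd x).hasFDerivAt.pow 2
    have h2 := ((hψ1 x hx (EuclideanSpace.single i 1)).differentiableAt (by norm_num)).hasFDerivAt
    have h3 := (hηd (-ψ x)).hasDerivAt.comp_hasFDerivAt x (hψd x hx).hasFDerivAt.neg
    have h4 := h1.mul (h2.mul ((hasDerivAt_inv (hηpos (-ψ x)).ne').comp_hasFDerivAt x h3))
    have h5 : HasFDerivAt (X i) _ x := h4.congr_of_eventuallyEq
      (Filter.Eventually.of_forall fun y => by simp [hX, div_eq_mul_inv])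
    rw [h5.fderiv]
    have := (hηpos (-ψ x)).ne'
    simp
    field_simp
    ring
  have hA : Integrable (fun x => φ x ^ 2 * (2 * lap n ψ x / η (-ψ x) +
        deriv η (-ψ x) * ‖gradient ψ x‖ ^ 2 / η (-ψ x) ^ 2)) := by
    refine aux_int _ Ω hφs hφΩ _ (fun x hx => ?_) (fun x hx => by simp [hz x hx])
    simp only [aux_grad, lap]
    have hs1 : ContinuousAt (fun x => ∑ i : Fin n, fderiv ℝ
        (fun y => fderiv ℝ ψ y (EuclideanSpace.single i 1)) x (EuclideanSpace.single i 1)) x :=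
      tendsto_finsetSum _ fun i _ => hψ2 x hx _
    have hs2 : ContinuousAt (fun x => ∑ i : Fin n,
        (fderiv ℝ ψ x (EuclideanSpace.single i 1)) ^ 2) x :=
      tendsto_finsetSum _ fun i _ => (hψ1 x hx _).continuousAt.pow 2
    refine (hφ.continuous.continuousAt.pow 2).mul
      (((continuousAt_const.mul hs1).div (hηψ x hx) (hηpos _).ne').add
      (((hηψ' x hx).mul hs2).div ((hηψ x hx).pow 2) (pow_pos (hηpos _) 2).ne'))
  have hB : Integrable (fun x => ‖gradient φ x‖ ^ 2 / deriv η (-ψ x)) := by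
    refine aux_int _ Ω hφs hφΩ _ (fun x hx => ?_) (fun x hx => ?_)
    · simp only [aux_grad]
      have hs2 : ContinuousAt (fun x => ∑ i : Fin n,
          (fderiv ℝ φ x (EuclideanSpace.single i 1)) ^ 2) x :=
        tendsto_finsetSum _ fun i _ => (hφ1 _).continuousAt.pow 2
      exact hs2.div (hηψ' x hx) (hη' _).ne'
    · have : fderiv ℝ φ x = 0 := by
        by_contra h
        exact hx (support_fderiv_subset ℝ h)
      simp [gradient, this]
  have hD : Integrable (fun x => ∑ i, fderiv ℝ (X i) x (EuclideanSpace.single i 1)) :=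
    integrable_finsetSum _ fun i _ => hXdi i
  calc _ ≤ ∫ x in Ω, (4 * (‖gradient φ x‖ ^ 2 / deriv η (-ψ x)) +
        2 * ∑ i, fderiv ℝ (X i) x (EuclideanSpace.single i 1)) := by
        refine setIntegral_mono_on hA.integrableOn
          ((hB.const_mul 4).add (hD.const_mul 2)).integrableOn hΩ.measurableSet ?_
        intro x hx
        have key := Finset.sum_le_sum (s := Finset.univ) fun (i : Fin n) _ =>
          aux_alg (φ x) (fderiv ℝ ψ x (EuclideanSpace.single i 1))
            (fderiv ℝ φ x (EuclideanSpace.single i 1))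
            (fderiv ℝ (fun y => fderiv ℝ ψ y (EuclideanSpace.single i 1)) x
              (EuclideanSpace.single i 1)) _ _ (hηpos (-ψ x)) (hη' (-ψ x))
        simp only [← hXf _ x hx] at key
        rw [Finset.sum_add_distrib, ← Finset.mul_sum, ← Finset.mul_sum, ← Finset.mul_sum,
          Finset.sum_add_distrib, ← Finset.sum_div, ← Finset.sum_div, ← Finset.sum_div,
          ← Finset.mul_sum, ← Finset.mul_sum, ← aux_grad, ← aux_grad] at key
        exact key
    _ = _ := by
        rw [integral_add (hB.const_mul 4).integrableOn (hD.const_mul 2).integrableOn,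
          integral_const_mul, integral_const_mul,
          integral_finsetSum _ fun i _ => (hXdi i).integrableOn]
        simp [hXint]
end
end

section
/- Let a ∈ ℝⁿ and r > 0, and let ψ be a negative subharmonic function on the ball B(a,2r) that is integrable on B(a,2r). Then ∫_{B(a,2r)} |ψ| ≤ 2ⁿ ∫_{B(a,r)} |ψ|. -/
open MeasureTheory Metric
open scoped Real Topology ENNReal

noncomputable section

/-- A function is subharmonic on an open set `U ⊆ ℝⁿ` if it is upper semicontinuous on `U`
and satisfies the sub-mean value property on balls whose closure lies in `U`. -/
def Subh (n : ℕ) (ψ : EuclideanSpace ℝ (Fin n) → ℝ) (U : Set (EuclideanSpace ℝ (Fin n))) : Prop :=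
  UpperSemicontinuousOn ψ U ∧
    ∀ x ∈ U, ∀ s : ℝ, 0 < s → closedBall x s ⊆ U → ψ x ≤ ⨍ y in ball x s, ψ y


set_option maxHeartbeats 1000000 in
lemma exists_radial_avg (n : ℕ) (v : EuclideanSpace ℝ (Fin n) → ℝ≥0∞)
    (hv : LowerSemicontinuous v) :
    ∃ U : EuclideanSpace ℝ (Fin n) → ℝ≥0∞, LowerSemicontinuous U ∧
      (∀ x y, ‖x‖ = ‖y‖ → U x = U y) ∧
      (∀ ρ : ℝ, ∫⁻ x in ball 0 ρ, U x = ∫⁻ x in ball 0 ρ, v x) ∧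
      (∀ (x : EuclideanSpace ℝ (Fin n)) (s : ℝ),
        (∀ y, ‖y‖ = ‖x‖ → ∫⁻ z in ball y s, v z ≤ volume (ball x s) * v y) →
        ∫⁻ z in ball x s, U z ≤ volume (ball x s) * U x) := by
  let E := EuclideanSpace ℝ (Fin n)
  let G := unitary (E →L[ℝ] E)
  have : ProperSpace (E →L[ℝ] E) := FiniteDimensional.proper ℝ _
  have : ContinuousStar (E →L[ℝ] E) :=
    ⟨(ContinuousLinearMap.adjoint (𝕜 := ℝ) (E := E) (F := E)).continuous⟩
  have : CompactSpace G := by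
    apply isCompact_iff_compactSpace.1
    apply Metric.isCompact_of_isClosed_isBounded
    · exact isClosed_unitary
    · refine (isBounded_iff_forall_norm_le).2 ⟨1, fun g hg => ?_⟩
      refine ContinuousLinearMap.opNorm_le_bound _ zero_le_one fun x => ?_
      have := (Unitary.linearIsometryEquiv (⟨g, hg⟩ : G)).norm_map x
      rw [one_mul]
      exact this.le
  let _ : MeasurableSpace G := borel G
  have : BorelSpace G := ⟨rfl⟩
  let μ : Measure G := Measure.haarMeasure ⊤
  have : IsProbabilityMeasure μ := ⟨by
    have := Measure.haarMeasure_self (G := G) (K₀ := ⊤)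
    simpa using this⟩
  let L : G → E ≃ₗᵢ[ℝ] E := fun g => Unitary.linearIsometryEquiv g⁻¹
  have hLc : Continuous fun p : G × E => L p.1 p.2 := by
    have h1 : Continuous fun p : G × E => ((p.1⁻¹ : G) : E →L[ℝ] E) :=
      continuous_subtype_val.comp (continuous_inv.comp continuous_fst)
    exact h1.clm_apply continuous_snd
  have hw : LowerSemicontinuous fun p : G × E => v (L p.1 p.2) := hv.comp hLc
  have hwm : Measurable fun p : G × E => v (L p.1 p.2) := hw.measurable
  have hwy : ∀ y : E, Measurable fun g : G => v (L g y) := fun y =>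
    Measurable.comp (g := fun p : G × E => v (L p.1 p.2)) (f := fun g : G => (g, y)) hwm
      measurable_prodMk_right
  -- change of variables
  have hcv : ∀ (g : G) (x : E) (s : ℝ), ∫⁻ z in ball x s, v (L g z) = ∫⁻ z in ball (L g x) s, v z := by
    intro g x s
    have h := (L g).measurePreserving.setLIntegral_comp_preimage_emb
      (L g).toHomeomorph.measurableEmbedding v (ball (L g x) s)
    rw [← h, LinearIsometryEquiv.preimage_ball, LinearIsometryEquiv.symm_apply_apply]
  have hswap : ∀ (x : E) (s : ℝ), ∫⁻ z in ball x s, ∫⁻ g, v (L g z) ∂μ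
      = ∫⁻ g, (∫⁻ z in ball (L g x) s, v z) ∂μ := by
    intro x s
    simp_rw [← hcv]
    exact lintegral_lintegral_swap (hwm.comp measurable_swap).aemeasurable
  refine ⟨fun x => ∫⁻ g, v (L g x) ∂μ, ?_, ?_, ?_, ?_⟩
  · rw [lowerSemicontinuous_iff_le_liminf]
    intro x
    refine le_trans (lintegral_mono fun g => ?_)
      (lintegral_liminf_le (u := 𝓝 x) (f := fun y (g : G) => v (L g y))
        hwy)
    have : LowerSemicontinuous fun y => v (L g y) := hv.comp (L g).continuous
    exact this.le_liminf x
  · intro x y hxy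
    let h : G := Unitary.linearIsometryEquiv.symm (Submodule.reflection (Submodule.span ℝ {x - y})ᗮ)
    have hh : Unitary.linearIsometryEquiv h x = y := by
      have := Submodule.reflection_sub hxy
      simpa [h] using this
    have := lintegral_mul_left_eq_self (μ := μ) (fun g => v (L g y)) h
    refine Eq.trans ?_ this
    refine lintegral_congr fun g => ?_
    congr 1
    simp only [L, mul_inv_rev, map_mul, map_inv]
    rw [← hh]
    simp
  · intro ρ
    rw [hswap]
    simp
    rfl
  · intro x s H
    rw [hswap]
    refine (lintegral_mono fun g => H (L g x) (by simp)).trans ?_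
    rw [lintegral_const_mul]
    exact hwy x

lemma radial_mono (n : ℕ) (U : EuclideanSpace ℝ (Fin n) → ℝ≥0∞) (R : ℝ)
    (hU : LowerSemicontinuous U) (hrad : ∀ x y, ‖x‖ = ‖y‖ → U x = U y)
    (hsm : ∀ (x : EuclideanSpace ℝ (Fin n)) (s : ℝ), 0 < s → closedBall x s ⊆ ball 0 R →
      ∫⁻ z in ball x s, U z ≤ volume (ball x s) * U x)
    (x y : EuclideanSpace ℝ (Fin n)) (hxy : ‖x‖ ≤ ‖y‖) (hy : ‖y‖ < R) : U y ≤ U x := by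
  rcases subsingleton_or_nontrivial (EuclideanSpace ℝ (Fin n)) with hs | hs
  · rw [Subsingleton.elim x y]
  set ρ := ‖y‖
  have hK : IsCompact (closedBall (0 : EuclideanSpace ℝ (Fin n)) ρ) := isCompact_closedBall _ _
  obtain ⟨p, hp, hpmin⟩ := LowerSemicontinuousOn.exists_isMinOn ⟨x, by simpa using hxy⟩ hK
    (hU.lowerSemicontinuousOn _)
  have hK2 : IsCompact (closedBall (0 : EuclideanSpace ℝ (Fin n)) ρ ∩ U ⁻¹' Set.Iic (U p)) :=
    hK.inter_right (hU.isClosed_preimage _)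
  obtain ⟨q, ⟨hq, hqm⟩, hqmax⟩ := hK2.exists_isMaxOn ⟨p, hp, le_refl (U p)⟩ continuous_norm.continuousOn
  have hqx : ∀ z ∈ closedBall (0 : EuclideanSpace ℝ (Fin n)) ρ, U q ≤ U z :=
    fun z hz => le_trans hqm (hpmin hz)
  have hqn : ‖q‖ ≤ ρ := by simpa using hq
  rcases hqn.eq_or_lt with h | h
  · rw [← hrad q y h]
    exact hqx x (by simpa using hxy)
  by_cases htop : U q = ∞
  · have := hqx x (by simpa using hxy)
    rw [htop, top_le_iff] at this
    rw [this]; exact le_top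
  exfalso
  set s := (ρ - ‖q‖) / 2 with hsdef
  have hs0 : 0 < s := by rw [hsdef]; linarith
  have hball : closedBall q s ⊆ closedBall 0 ρ := by
    intro z hz
    rw [mem_closedBall, dist_eq_norm] at hz
    rw [mem_closedBall_zero_iff]
    have := norm_le_norm_add_norm_sub' z q
    linarith
  have h1 := hsm q s hs0 (hball.trans (closedBall_subset_ball hy))
  have hae : (fun _ => U q) =ᵐ[volume.restrict (ball q s)] U := by
    refine ae_eq_of_ae_le_of_lintegral_le ?_ ?_ hU.measurable.aemeasurable ?_
    · filter_upwards [ae_restrict_mem measurableSet_ball] with z hz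
      exact hqx z (hball (ball_subset_closedBall hz))
    · simpa using ENNReal.mul_ne_top htop measure_ball_lt_top.ne
    · simpa [mul_comm] using h1
  -- the open set of points of larger norm
  have hO : IsOpen (ball q s ∩ {z | ‖q‖ < ‖z‖}) :=
    isOpen_ball.inter (isOpen_lt continuous_const continuous_norm)
  have hne : (ball q s ∩ {z | ‖q‖ < ‖z‖}).Nonempty := by
    by_cases hq0 : q = 0
    · obtain ⟨w, hw⟩ := exists_norm_eq (EuclideanSpace ℝ (Fin n)) (c := s / 2) (by linarith)
      refine ⟨w, ?_, ?_⟩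
      · rw [hq0, mem_ball_zero_iff, hw]; linarith
      · simp only [hq0, norm_zero, Set.mem_ofPred_eq, hw]; linarith
    · have hqp : 0 < ‖q‖ := norm_pos_iff.2 hq0
      have hc : 0 < s / 2 / ‖q‖ := by positivity
      refine ⟨(1 + s / 2 / ‖q‖) • q, ?_, ?_⟩
      · rw [mem_ball, dist_eq_norm, add_smul, one_smul, add_sub_cancel_left, norm_smul,
          Real.norm_of_nonneg hc.le, div_mul_cancel₀ _ hqp.ne']
        linarith
      · rw [Set.mem_ofPred_eq, norm_smul, Real.norm_of_nonneg (by linarith)]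
        nlinarith
  have hpos := hO.measure_pos volume hne
  have hz : volume (ball q s ∩ {z | ‖q‖ < ‖z‖}) = 0 := by
    rw [Filter.EventuallyEq, ae_restrict_iff' measurableSet_ball] at hae
    refine measure_mono_null ?_ (ae_iff.1 hae)
    rintro z ⟨hz1, hz2⟩ hz3
    have hz4 := hball (ball_subset_closedBall hz1)
    have : ‖z‖ ≤ ‖q‖ := hqmax ⟨hz4, by
      show U z ≤ U p
      rw [← hz3 hz1]; exact hqm⟩
    exact absurd this (not_le.2 hz2)
  exact hpos.ne' hz

lemma scale_lintegral (n : ℕ) (U : EuclideanSpace ℝ (Fin n) → ℝ≥0∞) (r : ℝ)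
    (hU : Measurable U) :
    ∫⁻ x in ball 0 (2 * r), U x = 2 ^ n * ∫⁻ x in ball 0 r, U ((2 : ℝ) • x) := by
  have hm := Measure.map_addHaar_smul (volume : Measure (EuclideanSpace ℝ (Fin n)))
    (r := 2) two_ne_zero
  have h := setLIntegral_map (μ := volume) (f := U)
    (g := fun x : EuclideanSpace ℝ (Fin n) => (2 : ℝ) • x)
    (s := ball 0 (2 * r)) measurableSet_ball hU (measurable_const_smul _)
  have hpre : (fun x : EuclideanSpace ℝ (Fin n) => (2 : ℝ) • x) ⁻¹' ball 0 (2 * r) = ball 0 r := by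
    ext x
    simp [norm_smul]
  rw [hpre, hm, Measure.restrict_smul, lintegral_smul_measure] at h
  rw [← h, smul_eq_mul, ← mul_assoc]
  have : (2 : ℝ≥0∞) ^ n * ENNReal.ofReal |((2 : ℝ) ^ Module.finrank ℝ (EuclideanSpace ℝ (Fin n)))⁻¹| = 1 := by
    rw [finrank_euclideanSpace_fin, abs_of_pos (by positivity), ENNReal.ofReal_inv_of_pos (by positivity),
      ENNReal.ofReal_pow (by norm_num), ENNReal.ofReal_ofNat]
    exact ENNReal.mul_inv_cancel (by simp) (by simp)
  rw [this, one_mul]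

lemma doubling_aux (n : ℕ) (v : EuclideanSpace ℝ (Fin n) → ℝ≥0∞)
    (hv : LowerSemicontinuous v) (r : ℝ)
    (hsm : ∀ (x : EuclideanSpace ℝ (Fin n)) (s : ℝ), 0 < s → closedBall x s ⊆ ball 0 (2 * r) →
      ∫⁻ z in ball x s, v z ≤ volume (ball x s) * v x) :
    ∫⁻ x in ball 0 (2 * r), v x ≤ 2 ^ n * ∫⁻ x in ball 0 r, v x := by
  obtain ⟨U, hU, hrad, hint, hmean⟩ := exists_radial_avg n v hv
  rw [← hint, ← hint, scale_lintegral n U r hU.measurable]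
  gcongr 2 ^ n * ?_
  refine setLIntegral_mono' measurableSet_ball fun x hx => ?_
  rw [mem_ball_zero_iff] at hx
  have h2 : ‖(2 : ℝ) • x‖ = 2 * ‖x‖ := by simp [norm_smul]
  refine radial_mono n U (2 * r) hU hrad ?_ _ _ ?_ ?_
  · intro x s hs hsub
    refine hmean x s fun y hy => ?_
    rw [Measure.addHaar_ball_center volume x, ← Measure.addHaar_ball_center volume y]
    refine hsm y s hs ?_
    -- transport the inclusion by a reflection
    have hT := Submodule.reflection_sub hy
    set T := Submodule.reflection (Submodule.span ℝ {y - x})ᗮ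
    intro z hz
    have : T z ∈ ball (0 : EuclideanSpace ℝ (Fin n)) (2 * r) := hsub (by
      rw [mem_closedBall, ← hT, T.dist_map]; exact hz)
    simpa using this
  · rw [h2]; linarith [norm_nonneg x]
  · rw [h2]; linarith

theorem stmt_9 (n : ℕ) (a : EuclideanSpace ℝ (Fin n)) (r : ℝ) (hr : 0 < r)
    (ψ : EuclideanSpace ℝ (Fin n) → ℝ)
    (hsub : Subh n ψ (ball a (2 * r)))
    (hneg : ∀ x ∈ ball a (2 * r), ψ x < 0)
    (hint : IntegrableOn ψ (ball a (2 * r))) :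
    (∫ x in ball a (2 * r), |ψ x|) ≤ 2 ^ n * ∫ x in ball a r, |ψ x| := by
  obtain ⟨husc, hmean⟩ := hsub
  have hmem : ∀ (b x : EuclideanSpace ℝ (Fin n)) (s : ℝ), a + x ∈ ball (a + b) s ↔ x ∈ ball b s := by
    intro b x s; simp [mem_ball]
  have hmem0 : ∀ (x : EuclideanSpace ℝ (Fin n)) (s : ℝ), a + x ∈ ball a s ↔ x ∈ ball 0 s := by
    intro x s; simpa using hmem 0 x s
  set v : EuclideanSpace ℝ (Fin n) → ℝ≥0∞ :=
    (ball 0 (2 * r)).indicator fun x => ENNReal.ofReal (-ψ (a + x)) with hvdef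
  have hvin : ∀ x ∈ ball (0 : EuclideanSpace ℝ (Fin n)) (2 * r),
      v x = ENNReal.ofReal (-ψ (a + x)) := fun x hx => Set.indicator_of_mem hx _
  have hv : LowerSemicontinuous v := by
    intro x c hc
    have hx : x ∈ ball (0 : EuclideanSpace ℝ (Fin n)) (2 * r) := by
      by_contra hx
      rw [hvdef, Set.indicator_of_notMem hx] at hc
      exact not_lt_zero hc
    change c < v x at hc
    have hctop : c ≠ ∞ := ne_top_of_lt hc
    rw [hvin x hx, ENNReal.lt_ofReal_iff_toReal_lt hctop] at hc
    have hax := (hmem0 x _).2 hx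
    have h1 := husc (a + x) hax (-c.toReal) (by change ψ (a + x) < _; linarith)
    rw [isOpen_ball.nhdsWithin_eq hax] at h1
    have h2 : Filter.Tendsto (fun z => a + z) (𝓝 x) (𝓝 (a + x)) :=
      (continuous_const.add continuous_id).tendsto x
    filter_upwards [h2.eventually h1, isOpen_ball.mem_nhds hx] with z hz hzb
    change c < v z
    rw [hvin z hzb, ENNReal.lt_ofReal_iff_toReal_lt hctop]
    change ψ (a + z) < _ at hz
    linarith
  -- integrals of `v` in terms of `ψ`
  have hI : ∀ (x : EuclideanSpace ℝ (Fin n)) (s : ℝ), ball x s ⊆ ball 0 (2 * r) →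
      ∫⁻ z in ball x s, v z = ENNReal.ofReal (∫ z in ball (a + x) s, -ψ z) := by
    intro x s hs
    have hs' : ball (a + x) s ⊆ ball a (2 * r) := by
      intro z hz
      have e : a + (z - a) = z := by abel
      rw [← e] at hz ⊢
      exact (hmem0 _ _).2 (hs ((hmem _ _ _).1 hz))
    rw [ofReal_integral_eq_lintegral_ofReal (f := fun z => -ψ z) (hint.mono_set hs').neg]
    · have h := (measurePreserving_add_left volume a).setLIntegral_comp_preimage_emb
        (MeasurableEquiv.addLeft a).measurableEmbedding (fun z => ENNReal.ofReal (-ψ z))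
        (ball (a + x) s)
      rw [← h]
      have hp : (fun z => a + z) ⁻¹' ball (a + x) s = ball x s := by
        ext z; exact hmem x z s
      rw [hp]
      exact setLIntegral_congr_fun measurableSet_ball fun z hz => hvin z (hs hz)
    · filter_upwards [ae_restrict_mem measurableSet_ball] with z hz
      have := hneg z (hs' hz)
      simp only [Pi.zero_apply]
      linarith
  have hsm : ∀ (x : EuclideanSpace ℝ (Fin n)) (s : ℝ), 0 < s → closedBall x s ⊆ ball 0 (2 * r) →
      ∫⁻ z in ball x s, v z ≤ volume (ball x s) * v x := by
    intro x s hs hsub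
    have hx := hsub (mem_closedBall_self hs.le)
    rw [hI x s (ball_subset_closedBall.trans hsub), hvin x hx]
    have h := hmean (a + x) ((hmem0 _ _).2 hx) s hs (by
      intro z hz
      have e : a + (z - a) = z := by abel
      rw [← e]
      refine (hmem0 _ _).2 (hsub ?_)
      rw [mem_closedBall] at hz ⊢
      rw [← dist_add_left a, e]; exact hz)
    have hvol : volume (ball x s) = ENNReal.ofReal (volume.real (ball (a + x) s)) := by
      rw [ofReal_measureReal measure_ball_lt_top.ne, Measure.addHaar_ball_center volume x,
        Measure.addHaar_ball_center volume (a + x)]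
    have hpos : 0 < volume.real (ball (a + x) s) :=
      ENNReal.toReal_pos (measure_ball_pos _ _ hs).ne' measure_ball_lt_top.ne
    rw [hvol, ← ENNReal.ofReal_mul hpos.le]
    apply ENNReal.ofReal_le_ofReal
    rw [setAverage_eq, smul_eq_mul, inv_mul_eq_div, le_div_iff₀ hpos] at h
    rw [integral_neg]
    linarith
  have key := doubling_aux n v hv r hsm
  have hrr : ball a r ⊆ ball a (2 * r) := ball_subset_ball (by linarith)
  have habs : ∀ s : ℝ, ball a s ⊆ ball a (2 * r) →
      ∫ x in ball a s, |ψ x| = ∫ x in ball a s, -ψ x := fun s hs =>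
    setIntegral_congr_fun measurableSet_ball fun z hz => abs_of_neg (hneg z (hs hz))
  rw [hI 0 _ subset_rfl, hI 0 _ (ball_subset_ball (by linarith)), add_zero,
    ← habs _ subset_rfl, ← habs _ hrr] at key
  have hnn : 0 ≤ ∫ x in ball a r, |ψ x| := integral_nonneg fun _ => abs_nonneg _
  have e2 : (2 : ℝ≥0∞) ^ n = ENNReal.ofReal (2 ^ n) := by
    rw [ENNReal.ofReal_pow (by norm_num), ENNReal.ofReal_ofNat]
  rw [e2, ← ENNReal.ofReal_mul (by positivity)] at key
  exact (ENNReal.ofReal_le_ofReal_iff (by positivity)).1 key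
end
end

section
/- Let α > 1 and R > 0. There is a constant C_α > 0 depending only on α such that for every function ψ on the disk B_{2R} ⊆ ℂ that is subharmonic, negative, and integrable on B_{2R}, and every disk B ⊆ B_R, one has ⨍_B |ψ − ψ_B| ≤ C_α ⨍_{B_{3R/2}} (1 + |ψ|)^α. -/
open MeasureTheory Metric
open scoped Real Topology ENNReal

noncomputable section

/-- A function is subharmonic on an open set `U ⊆ ℂ` if it is upper semicontinuous on `U`
and satisfies the sub-mean value property on disks whose closure lies in `U`. -/
def SubhC (ψ : ℂ → ℝ) (U : Set ℂ) : Prop :=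
  UpperSemicontinuousOn ψ U ∧
    ∀ x ∈ U, ∀ s : ℝ, 0 < s → closedBall x s ⊆ U → ψ x ≤ ⨍ y in ball x s, ψ y


def FF (t : ℝ) : ℝ := if t < 1 then (t - 1) / 2 else Real.log t / 2
def EE (s : ℝ) (y : ℂ) : ℝ := FF (‖y‖ ^ 2 / s ^ 2) + Real.log s

lemma FF_cont : Continuous FF := by
  have : FF = fun t => (min t 1 - 1) / 2 + Real.log (max t 1) / 2 := by
    funext t
    unfold FF
    split_ifs with h
    · rw [min_eq_left h.le, max_eq_right h.le]; simp
    · push Not at h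
      rw [min_eq_right h, max_eq_left h]; simp
  rw [this]
  have : Continuous fun t : ℝ => Real.log (max t 1) :=
    Continuous.log (by fun_prop) (fun t => by positivity)
  fun_prop

lemma EE_cont (s : ℝ) : Continuous (EE s) := by
  unfold EE
  have := FF_cont
  fun_prop

lemma FF_taylor (t u : ℝ) (ht : 0 ≤ t) (hu : 0 ≤ u) :
    ∃ f, 0 ≤ f ∧ f ≤ 1 / 2 ∧ ∀ u, 0 ≤ u → |FF u - FF t - f * (u - t)| ≤ (u - t) ^ 2 / 2 := by
  by_cases h : t < 1
  · refine ⟨1/2, by norm_num, le_refl _, fun u hu => ?_⟩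
    unfold FF
    rw [if_pos h]
    split_ifs with h2
    · rw [abs_le]; constructor <;> nlinarith [sq_nonneg (u - t)]
    · push Not at h2
      have h3 := Real.log_le_sub_one_of_pos (show 0 < u by linarith)
      have h4 := Real.one_sub_inv_le_log_of_pos (show 0 < u by linarith)
      have h5 : 1 - u⁻¹ - u + 1 ≥ - (u - 1)^2 := by
        have : u⁻¹ ≤ 1 := inv_le_one_of_one_le₀ h2
        have h6 : u * u⁻¹ = 1 := mul_inv_cancel₀ (by linarith)
        nlinarith
      rw [abs_le]; constructor <;> nlinarith [sq_nonneg (u - t)]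
  · push Not at h
    have h0 : 0 < t := by linarith
    refine ⟨1/2 * t⁻¹, by positivity, ?_, fun u hu => ?_⟩
    · have : t⁻¹ ≤ 1 := inv_le_one_of_one_le₀ h
      linarith
    have hi : t * t⁻¹ = 1 := mul_inv_cancel₀ (by linarith)
    have hi1 : t⁻¹ ≤ 1 := inv_le_one_of_one_le₀ h
    have hi0 : 0 < t⁻¹ := by positivity
    unfold FF
    rw [if_neg (not_lt.2 h)]
    split_ifs with h2
    · have h3 := Real.log_le_sub_one_of_pos h0
      have h4 := Real.one_sub_inv_le_log_of_pos h0
      have e1 : 1/2 * t⁻¹ * (u - t) = (u * t⁻¹ - 1) / 2 := by linear_combination (-1/2) * hi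
      rw [e1, abs_le]; constructor
      · have : (u - t) * (1 - t⁻¹) ≥ - (u-t)^2 := by
          have : 1 - t⁻¹ ≤ t - u := by nlinarith
          nlinarith
        nlinarith
      · have : (1 - u) * (1 - t⁻¹) ≥ 0 := mul_nonneg (by linarith) (by linarith)
        nlinarith [sq_nonneg (u - t)]
    · push Not at h2
      have hu0 : 0 < u := by linarith
      have h3 := Real.log_le_sub_one_of_pos (show 0 < u * t⁻¹ by positivity)
      have h4 := Real.one_sub_inv_le_log_of_pos (show 0 < u * t⁻¹ by positivity)
      rw [Real.log_mul hu0.ne' hi0.ne', Real.log_inv] at h3 h4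
      have e1 : 1/2 * t⁻¹ * (u - t) = (u * t⁻¹ - 1) / 2 := by linear_combination (-1/2) * hi
      rw [e1, abs_le]; constructor
      · have hj : u * u⁻¹ = 1 := mul_inv_cancel₀ (by linarith)
        have hj1 : u⁻¹ ≤ 1 := inv_le_one_of_one_le₀ h2
        have hj0 : 0 < u⁻¹ := by positivity
        rw [mul_inv, inv_inv] at h4
        have : (u - t)^2 * (1 - u⁻¹ * t⁻¹) ≥ 0 := by
          apply mul_nonneg (sq_nonneg _)
          nlinarith
        have e : (u - t)^2 * (u⁻¹ * t⁻¹) = u * t⁻¹ + u⁻¹ * t - 2 := by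
          field_simp
          ring
        nlinarith
      · nlinarith [sq_nonneg (u - t)]

def QQ (h : ℂ → ℝ) (v x : ℂ) : ℝ :=
  h (x - v) + h (x - Complex.I * v) + h (x - (-v)) + h (x - (-(Complex.I * v))) - 4 * h x

lemma nsq (z : ℂ) : ‖z‖^2 = z.re^2 + z.im^2 := by
  rw [Complex.sq_norm, Complex.normSq_apply]; ring

lemma QQ_bound (s : ℝ) (hs : 0 < s) (Y : ℝ) : ∃ C, ∀ v y : ℂ, ‖v‖ ≤ 1 → ‖y‖ ≤ Y →
    |QQ (EE s) v y| ≤ C * ‖v‖^2 := by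
  refine ⟨2 / s^2 + 2 * (2 * Y + 1)^2 / s^4, fun v y hv hy => ?_⟩
  obtain ⟨f, hf0, hf1, hf⟩ := FF_taylor (‖y‖^2/s^2) 0 (by positivity) le_rfl
  have key : ∀ w : ℂ, ‖w‖ = ‖v‖ → |FF (‖y - w‖^2/s^2) - FF (‖y‖^2/s^2)
      - f * (‖y - w‖^2/s^2 - ‖y‖^2/s^2)| ≤ (2 * Y + 1)^2 * ‖v‖^2 / s^4 / 2 := by
    intro w hw
    refine (hf _ (by positivity)).trans ?_
    have e : (‖y - w‖^2/s^2 - ‖y‖^2/s^2)^2 = (‖y - w‖^2 - ‖y‖^2)^2 / s^4 := by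
      field_simp
    rw [e]
    gcongr
    have h1 := norm_sub_le y w
    have h2 := norm_sub_norm_le y w
    have h3 := norm_nonneg (y - w)
    have h4 := norm_nonneg y
    have h5 := norm_nonneg v
    rw [hw] at h1 h2
    have h6 : |‖y - w‖ - ‖y‖| ≤ ‖v‖ := by rw [abs_le]; constructor <;> linarith
    have h7 : |‖y - w‖ + ‖y‖| ≤ 2 * Y + 1 := by rw [abs_of_nonneg (by positivity)]; linarith
    have h8 : 0 ≤ 2 * Y + 1 := by linarith
    calc (‖y - w‖^2 - ‖y‖^2)^2 = (|‖y - w‖ + ‖y‖| * |‖y - w‖ - ‖y‖|)^2 := by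
          rw [mul_pow, sq_abs, sq_abs]; ring
      _ ≤ ((2 * Y + 1) * ‖v‖)^2 := by gcongr
      _ = _ := by ring
  have k1 := key v rfl
  have k2 := key (Complex.I * v) (by simp)
  have k3 := key (-v) (by simp)
  have k4 := key (-(Complex.I * v)) (by simp)
  have hsum : ‖y - v‖^2 + ‖y - Complex.I * v‖^2 + ‖y - (-v)‖^2 + ‖y - (-(Complex.I * v))‖^2
      = 4 * ‖y‖^2 + 4 * ‖v‖^2 := by
    simp only [nsq]; simp; ring
  have hsum2 : (‖y - v‖^2/s^2 - ‖y‖^2/s^2) + (‖y - Complex.I * v‖^2/s^2 - ‖y‖^2/s^2)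
     + (‖y - (-v)‖^2/s^2 - ‖y‖^2/s^2) + (‖y - (-(Complex.I * v))‖^2/s^2 - ‖y‖^2/s^2)
      = 4 * (‖v‖^2 / s^2) := by
    linear_combination (1 / s^2) * hsum
  unfold QQ EE
  have hE : 2 / s^2 * ‖v‖^2 = 2 * (‖v‖^2/s^2) := by ring
  have hE2 : (2 / s^2 + 2 * (2 * Y + 1)^2 / s^4) * ‖v‖^2 = 2 * (‖v‖^2/s^2) + 4 * ((2 * Y + 1)^2 * ‖v‖^2 / s^4 / 2) := by ring
  rw [hE2]
  have hp : 0 ≤ ‖v‖^2/s^2 := by positivity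
  have hf2 : f * (4 * (‖v‖^2 / s^2)) ≤ 2 * (‖v‖^2 / s^2) := by nlinarith
  have hf3 : 0 ≤ f * (4 * (‖v‖^2 / s^2)) := by positivity
  rw [← hsum2] at hf2 hf3
  rw [abs_le] at *
  constructor <;> nlinarith

lemma QQ_lim (s : ℝ) (hs : 0 < s) (y : ℂ) (hy : ‖y‖ ≠ s) :
    Filter.Tendsto (fun v => QQ (EE s) v y / ‖v‖^2) (𝓝[≠] 0)
      (𝓝 (if ‖y‖ < s then 2 / s^2 else 0)) := by
  have hsum : ∀ v, ‖y - v‖^2 + ‖y - Complex.I * v‖^2 + ‖y - (-v)‖^2 + ‖y - (-(Complex.I * v))‖^2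
      = 4 * ‖y‖^2 + 4 * ‖v‖^2 := by
    intro v
    simp only [nsq]; simp; ring
  have hv0 : ∀ᶠ v : ℂ in 𝓝[≠] 0, v ≠ 0 := eventually_mem_nhdsWithin
  have hsm : ∀ d > 0, ∀ᶠ v : ℂ in 𝓝[≠] 0, ‖v‖ < d := fun d hd =>
    nhdsWithin_le_nhds (by simpa [ball, dist_zero_right] using ball_mem_nhds (0:ℂ) hd)
  split_ifs with h
  · apply tendsto_const_nhds.congr'
    filter_upwards [hv0, hsm (s - ‖y‖) (by linarith)] with v hv hvs
    have kk : ∀ w : ℂ, ‖w‖ = ‖v‖ → FF (‖y - w‖^2/s^2) = (‖y - w‖^2/s^2 - 1) / 2 := by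
      intro w hw
      unfold FF
      rw [if_pos]
      rw [div_lt_one (by positivity)]
      have := norm_sub_le y w
      have := norm_nonneg (y - w)
      gcongr
      linarith
    have k0 : FF (‖y‖^2/s^2) = (‖y‖^2/s^2 - 1) / 2 := by
      unfold FF
      rw [if_pos]
      rw [div_lt_one (by positivity)]
      gcongr
    have : 0 < ‖v‖ := norm_pos_iff.2 hv
    unfold QQ EE
    rw [kk v rfl, kk (Complex.I * v) (by simp), kk (-v) (by simp), kk (-(Complex.I * v)) (by simp), k0]
    rw [eq_div_iff (by positivity)]
    linear_combination (-1 / (2*s^2)) * hsum v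
  · have h' : s < ‖y‖ := lt_of_le_of_ne (not_lt.1 h) (Ne.symm hy)
    have hy0 : 0 < ‖y‖ := by linarith
    have hyn : y ≠ 0 := norm_pos_iff.1 hy0
    have hb : ∀ᶠ v : ℂ in 𝓝[≠] 0, ‖QQ (EE s) v y / ‖v‖^2‖ ≤ 2 * ‖v‖^2 / ‖y‖^4 := by
      filter_upwards [hv0, hsm (‖y‖ - s) (by linarith), hsm (‖y‖/2) (by positivity)] with v hv hvs hv2
      have hvp : 0 < ‖v‖ := norm_pos_iff.2 hv
      have gen : ∀ z : ℂ, s < ‖z‖ → EE s z = Real.log ‖z‖ := by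
        intro z hz
        have : 0 < ‖z‖ := by linarith
        unfold EE FF
        rw [if_neg, Real.log_div (by positivity) (by positivity), Real.log_pow, Real.log_pow]
        · push_cast; ring
        · rw [div_lt_one (by positivity)]
          push Not
          gcongr
      have pos : ∀ w : ℂ, ‖w‖ = ‖v‖ → s < ‖y - w‖ := by
        intro w hw
        have := norm_sub_norm_le y w
        linarith
      have p1 := pos v rfl
      have p2 := pos (Complex.I * v) (by simp)
      have p3 := pos (-v) (by simp)
      have p4 := pos (-(Complex.I * v)) (by simp)
      set w : ℂ := (v / y)^4 with hw
      have hwn : ‖w‖ = ‖v‖^4 / ‖y‖^4 := by rw [hw]; simp [div_pow]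
      have hw2 : ‖w‖ ≤ 1/2 := by
        rw [hw, norm_pow, norm_div]
        have : ‖v‖ / ‖y‖ ≤ 1/2 := by rw [div_le_iff₀ hy0]; linarith
        calc (‖v‖ / ‖y‖)^4 ≤ (1/2)^4 := by gcongr
          _ ≤ _ := by norm_num
      have e : QQ (EE s) v y = Real.log ‖1 - w‖ := by
        unfold QQ
        rw [gen _ p1, gen _ p2, gen _ p3, gen _ p4, gen _ h']
        have e4 : (4:ℝ) * Real.log ‖y‖ = Real.log (‖y‖^4) := by rw [Real.log_pow]; norm_num
        rw [e4, ← Real.log_mul (by linarith) (by linarith), ← Real.log_mul (by nlinarith) (by linarith),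
          ← Real.log_mul (by have := mul_pos (hs.trans p1) (hs.trans p2); have := mul_pos this (hs.trans p3); exact this.ne') (by linarith),
          ← Real.log_div ?_ (by positivity), ← norm_mul, ← norm_mul, ← norm_mul, ← norm_pow, ← norm_div]
        · congr 2
          rw [hw]
          field_simp
          have i2 := Complex.I_sq
          have : Complex.I ^ 2 + 1 = 0 := by rw [i2]; ring
          linear_combination (-(v^2*y^2) + v^4) * this
        · have := mul_pos (hs.trans p1) (hs.trans p2); have := mul_pos this (hs.trans p3)
          have := mul_pos this (hs.trans p4)
          exact this.ne'
      have l1 : 1 - ‖w‖ ≤ ‖1 - w‖ := by simpa using norm_sub_norm_le (1:ℂ) w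
      have l2 : ‖1 - w‖ ≤ 1 + ‖w‖ := by simpa using norm_sub_le (1:ℂ) w
      have hpos : 0 < ‖1 - w‖ := by linarith
      have l3 := Real.log_le_sub_one_of_pos hpos
      have l4 := Real.one_sub_inv_le_log_of_pos hpos
      have hw0 := norm_nonneg w
      have l5 : ‖1 - w‖⁻¹ ≤ 1 + 2 * ‖w‖ := by
        rw [inv_le_iff_one_le_mul₀ hpos]
        nlinarith
      have : |Real.log ‖1 - w‖| ≤ 2 * ‖w‖ := by rw [abs_le]; constructor <;> linarith
      rw [e, norm_div, Real.norm_eq_abs, norm_pow, norm_norm, div_le_iff₀ (by positivity)]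
      refine this.trans (le_of_eq ?_)
      rw [hwn]; ring
    apply squeeze_zero_norm' hb
    have : Continuous fun v : ℂ => 2 * ‖v‖^2 / ‖y‖^4 := by fun_prop
    have := (this.tendsto 0).mono_left (nhdsWithin_le_nhds (s := {0}ᶜ))
    simpa using this

lemma cont_ball (f : ℂ → ℝ) (hf : Continuous f) (δ : ℝ) : IntegrableOn f (ball (0:ℂ) δ) :=
  (hf.continuousOn.integrableOn_compact (isCompact_closedBall (0:ℂ) δ)).mono_set ball_subset_closedBall

lemma int4 (μ : Measure ℂ) (f0 f1 f2 f3 : ℂ → ℝ) (h0 : Integrable f0 μ) (h1 : Integrable f1 μ)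
    (h2 : Integrable f2 μ) (h3 : Integrable f3 μ) :
    ∫ x, (f0 x + f1 x + f2 x + f3 x) ∂μ = ∫ x, f0 x ∂μ + ∫ x, f1 x ∂μ + ∫ x, f2 x ∂μ + ∫ x, f3 x ∂μ := by
  have h01 : Integrable (fun x => f0 x + f1 x) μ := h0.add h1
  have h012 : Integrable (fun x => f0 x + f1 x + f2 x) μ := h01.add h2
  rw [integral_add h012 h3, integral_add h01 h2, integral_add h0 h1]

lemma ball_shift (f : ℂ → ℝ) (x : ℂ) (δ : ℝ) :
    ∫ v in ball 0 δ, f (v + x) = ∫ y in ball x δ, f y := by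
  have := (measurePreserving_add_right (volume : Measure ℂ) x).setIntegral_preimage_emb
    (MeasurableEquiv.addRight x).measurableEmbedding f (ball x δ)
  rw [← this]
  congr 2
  ext v
  simp [dist_eq_norm]

lemma fub_int (ψ h : ℂ → ℝ) (hψ : Integrable ψ) (hc : Continuous h) (C : ℝ) (hb : ∀ x, |h x| ≤ C)
    (δ : ℝ) : Integrable (Function.uncurry fun v x : ℂ => ψ (v + x) * h x)
      ((volume.restrict (ball (0:ℂ) δ)).prod volume) := by
  have : IsFiniteMeasure ((volume : Measure ℂ).restrict (ball (0:ℂ) δ)) :=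
    ⟨by simpa using (measure_ball_lt_top : volume (ball (0:ℂ) δ) < ⊤)⟩
  have h1 := hψ.comp_snd ((volume : Measure ℂ).restrict (ball (0:ℂ) δ))
  have h2 := (measurePreserving_prod_add ((volume : Measure ℂ).restrict (ball (0:ℂ) δ)) volume).integrable_comp_of_integrable h1
  exact h2.mul_bdd (c := C) (by fun_prop) (Filter.Eventually.of_forall fun z => hb z.2)

lemma G_cont (ψ h : ℂ → ℝ) (hψ : Integrable ψ) (hc : Continuous h) (C : ℝ) (hb : ∀ x, |h x| ≤ C) :
    Continuous fun v => ∫ x, ψ x * h (x - v) := by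
  apply continuous_of_dominated (bound := fun x => |ψ x| * C)
  · intro v
    exact hψ.aestronglyMeasurable.mul (by fun_prop)
  · intro v
    filter_upwards with x
    rw [norm_mul]
    exact mul_le_mul_of_nonneg_left (hb _) (abs_nonneg _)
  · exact hψ.abs.mul_const C
  · filter_upwards with x
    fun_prop

lemma L1 (ψ h : ℂ → ℝ) (hψ : Integrable ψ) (hc : Continuous h) (C : ℝ) (hb : ∀ x, |h x| ≤ C)
    (h0 : ∀ x, 0 ≤ h x) (δ : ℝ) (hδ : 0 < δ) (hsub : ∀ x, h x ≠ 0 → ψ x ≤ ⨍ y in ball x δ, ψ y) :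
    0 ≤ ∫ v in ball (0:ℂ) δ, ((∫ x, ψ x * h (x - v)) - ∫ x, ψ x * h x) := by
  have hG : ∀ v : ℂ, ∫ x, ψ x * h (x - v) = ∫ x, ψ (v + x) * h x := by
    intro v
    rw [← integral_add_left_eq_self _ v]
    simp
  have hi := fub_int ψ h hψ hc C hb δ
  have hfin : volume (ball (0:ℂ) δ) ≠ ⊤ := measure_ball_lt_top.ne
  rw [integral_sub (cont_ball _ (G_cont ψ h hψ hc C hb) δ) (integrableOn_const (C := ∫ x, ψ x * h x) hfin)]
  simp_rw [hG]
  rw [integral_integral_swap hi, setIntegral_const]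
  have e : ∀ x, ∫ v in ball (0:ℂ) δ, ψ (v + x) * h x = (∫ y in ball x δ, ψ y) * h x := by
    intro x
    rw [integral_mul_const, ball_shift]
  rw [sub_nonneg, smul_eq_mul, ← integral_const_mul]
  apply integral_mono
  · exact (hψ.mul_bdd (c := C) (by fun_prop) (Filter.Eventually.of_forall hb)).const_mul _
  · exact hi.integral_prod_right
  · intro x
    simp only
    rw [e]
    by_cases hx : h x = 0
    · simp [hx]
    have h1 := hsub x hx
    rw [setAverage_eq, smul_eq_mul] at h1
    have hv : volume.real (ball x δ) = volume.real (ball (0:ℂ) δ) := by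
      simp [Measure.real]
    have hp : 0 < volume.real (ball (0:ℂ) δ) := by
      simp only [Measure.real]
      exact ENNReal.toReal_pos (measure_ball_pos _ _ hδ).ne' hfin
    rw [hv, inv_mul_eq_div, le_div_iff₀ hp] at h1
    nlinarith [h0 x]

lemma rot (G : ℂ → ℝ) (e : ℂ ≃ₗᵢ[ℝ] ℂ) (δ : ℝ) :
    ∫ v in ball (0:ℂ) δ, G (e v) = ∫ v in ball (0:ℂ) δ, G v := by
  have := e.measurePreserving.setIntegral_preimage_emb
    e.toHomeomorph.measurableEmbedding G (ball 0 δ)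
  rw [← this]
  congr 2
  ext v
  simp

lemma L2 (G : ℂ → ℝ) (hG : Continuous G) (ε : ℝ) (hε : 0 < ε)
    (hδ : ∀ δ, 0 < δ → δ ≤ ε → 0 ≤ ∫ v in ball (0:ℂ) δ, (G v - G 0)) (l : ℝ)
    (hl : Filter.Tendsto (fun v => (G v + G (Complex.I * v) + G (-v) + G (-(Complex.I * v)) - 4 * G 0) / ‖v‖^2)
      (𝓝[≠] 0) (𝓝 l)) : 0 ≤ l := by
  by_contra hneg
  push Not at hneg
  have h1 := hl.eventually_lt_const hneg
  rw [eventually_nhdsWithin_iff, Metric.eventually_nhds_iff_ball] at h1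
  obtain ⟨d, hd, h1⟩ := h1
  set δ := min d ε
  have hδ0 : 0 < δ := lt_min hd hε
  have h2 := hδ δ hδ0 (min_le_right _ _)
  let e : ℂ ≃ₗᵢ[ℝ] ℂ := rotation ⟨Complex.I, by simp [Submonoid.unitSphere]⟩
  have he : ∀ v, e v = Complex.I * v := fun v => rotation_apply _ _
  have r1 := rot (fun v => G v - G 0) e δ
  have r2 := rot (fun v => G v - G 0) (LinearIsometryEquiv.neg ℝ) δ
  have r3 := rot (fun v => G v - G 0) (e.trans (LinearIsometryEquiv.neg ℝ)) δ
  simp only [he, LinearIsometryEquiv.trans_apply, LinearIsometryEquiv.coe_neg] at r1 r2 r3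
  have ic : ∀ f : ℂ → ℝ, Continuous f → IntegrableOn f (ball (0:ℂ) δ) := fun f hf =>
    cont_ball f hf δ
  have i0 := ic (fun v => G v - G 0) (by fun_prop)
  have i1 := ic (fun v => G (Complex.I * v) - G 0) (by fun_prop)
  have i2 := ic (fun v => G (-v) - G 0) (by fun_prop)
  have i3 := ic (fun v => G (-(Complex.I * v)) - G 0) (by fun_prop)
  let J := fun v => -((G v - G 0) + (G (Complex.I * v) - G 0) + (G (-v) - G 0) + (G (-(Complex.I * v)) - G 0))
  have hJ : ∫ v in ball (0:ℂ) δ, J v = -(4 * ∫ v in ball (0:ℂ) δ, (G v - G 0)) := by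
    simp only [J]
    rw [integral_neg, int4 _ _ _ _ _ i0 i1 i2 i3, r1, r2, r3]
    ring
  have hJp : ∀ v ∈ ball (0:ℂ) δ, v ≠ 0 → 0 < J v := by
    intro v hv hv0
    have := h1 v (ball_subset_ball (min_le_left _ _) hv) hv0
    have hvp : 0 < ‖v‖ := norm_pos_iff.2 hv0
    rw [div_lt_iff₀ (by positivity)] at this
    simp only [J]
    linarith
  have hJ0 : J 0 = 0 := by simp [J]
  have hpos : 0 < ∫ v in ball (0:ℂ) δ, J v := by
    rw [setIntegral_pos_iff_support_of_nonneg_ae]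
    · have : ball (0:ℂ) δ \ {0} ⊆ Function.support J ∩ ball (0:ℂ) δ := by
        rintro v ⟨hv, hv0⟩
        exact ⟨(hJp v hv hv0).ne', hv⟩
      refine lt_of_lt_of_le ?_ (measure_mono this)
      rw [measure_sdiff_null (by simp)]
      exact measure_ball_pos _ _ hδ0
    · filter_upwards [ae_restrict_mem measurableSet_ball] with v hv
      by_cases h : v = 0
      · rw [h, hJ0]; rfl
      · exact (hJp v hv h).le
    · exact ic J (by fun_prop)
  linarith

lemma vol_real (a : ℂ) (s : ℝ) (hs : 0 < s) : volume.real (ball a s) = π * s^2 := by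
  simp [Measure.real, hs.le]; ring

lemma L3 (ψ : ℂ → ℝ) (hψ : Integrable ψ) (Y : ℝ) (hY : ∀ x, Y ≤ ‖x‖ → ψ x = 0)
    {n : ℕ} (c r : Fin n → ℝ) (p : Fin n → ℂ) (hr : ∀ i, 0 < r i)
    (h : ℂ → ℝ) (hh : ∀ y, h y = ∑ i, c i * EE (r i) (y - p i)) :
    Filter.Tendsto (fun v => ∫ x, ψ x * (QQ h v x / ‖v‖^2)) (𝓝[≠] 0)
      (𝓝 (2 * π * ∑ i, c i * ⨍ y in ball (p i) (r i), ψ y)) := by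
  have hQ : ∀ v x, QQ h v x = ∑ i, c i * QQ (EE (r i)) v (x - p i) := by
    intro v x
    unfold QQ
    simp only [hh, Finset.mul_sum, ← Finset.sum_add_distrib, ← Finset.sum_sub_distrib]
    refine Finset.sum_congr rfl fun i _ => ?_
    simp only [sub_right_comm _ (p i)]
    ring
  choose K hK using fun i => QQ_bound (r i) (hr i) (Y + ‖p i‖)
  have hlim : (2 * π * ∑ i, c i * ⨍ y in ball (p i) (r i), ψ y) =
      ∫ x, ψ x * ∑ i, c i * (if ‖x - p i‖ < r i then 2 / (r i)^2 else 0) := by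
    have e : ∀ x, ψ x * ∑ i, c i * (if ‖x - p i‖ < r i then 2 / (r i)^2 else 0) =
        ∑ i, (ball (p i) (r i)).indicator (fun x => (c i * (2 / (r i)^2)) * ψ x) x := by
      intro x
      rw [Finset.mul_sum]
      refine Finset.sum_congr rfl fun i _ => ?_
      simp only [Set.indicator, mem_ball, dist_eq_norm]
      split_ifs <;> ring
    simp_rw [e]
    rw [integral_finsetSum]
    · rw [Finset.mul_sum]
      refine Finset.sum_congr rfl fun i _ => ?_
      rw [integral_indicator measurableSet_ball, integral_const_mul, setAverage_eq, vol_real _ _ (hr i), smul_eq_mul]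
      have := hr i
      have := Real.pi_pos
      field_simp
    · intro i _
      exact (hψ.const_mul _).indicator measurableSet_ball
  rw [hlim]
  have hsm : ∀ᶠ v : ℂ in 𝓝[≠] 0, ‖v‖ < 1 := 
    nhdsWithin_le_nhds (by simpa [ball, dist_zero_right] using ball_mem_nhds (0:ℂ) one_pos)
  have hv0 : ∀ᶠ v : ℂ in 𝓝[≠] 0, v ≠ 0 := eventually_mem_nhdsWithin
  have hhc : Continuous h := by
    rw [funext hh]
    have := fun s => EE_cont s
    fun_prop
  apply tendsto_integral_filter_of_dominated_convergence (fun x => |ψ x| * ∑ i, |c i| * K i)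
  · filter_upwards with v
    apply hψ.aestronglyMeasurable.mul
    apply Continuous.aestronglyMeasurable
    unfold QQ
    fun_prop
  · filter_upwards [hsm, hv0] with v hv hv0
    filter_upwards with x
    rw [norm_mul, Real.norm_eq_abs]
    by_cases hx : Y ≤ ‖x‖
    · simp [hY x hx]
    push Not at hx
    apply mul_le_mul_of_nonneg_left _ (abs_nonneg _)
    have hvp : 0 < ‖v‖ := norm_pos_iff.2 hv0
    rw [norm_div, norm_pow, norm_norm, div_le_iff₀ (by positivity), hQ, Finset.sum_mul]
    refine (norm_sum_le _ _).trans (Finset.sum_le_sum fun i _ => ?_)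
    rw [norm_mul, Real.norm_eq_abs, Real.norm_eq_abs, mul_assoc]
    apply mul_le_mul_of_nonneg_left _ (abs_nonneg _)
    exact hK i v _ hv.le ((norm_sub_le _ _).trans (by linarith))
  · exact hψ.abs.mul_const _
  · have hsph : ∀ᵐ x : ℂ, ∀ i, ‖x - p i‖ ≠ r i := by
      rw [ae_all_iff]
      intro i
      have := Measure.addHaar_sphere (volume : Measure ℂ) (p i) (r i)
      rw [ae_iff]
      convert this using 2
      ext x
      simp [dist_eq_norm]
    filter_upwards [hsph] with x hx
    apply Filter.Tendsto.const_mul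
    simp_rw [hQ, Finset.sum_div, mul_div_assoc]
    apply tendsto_finsetSum
    intro i _
    exact (QQ_lim (r i) (hr i) _ (hx i)).const_mul _

lemma key (ψ : ℂ → ℝ) (hψ : Integrable ψ) (Y : ℝ) (hY : ∀ x, Y ≤ ‖x‖ → ψ x = 0)
    {n : ℕ} (c r : Fin n → ℝ) (p : Fin n → ℂ) (hr : ∀ i, 0 < r i)
    (h : ℂ → ℝ) (hh : ∀ y, h y = ∑ i, c i * EE (r i) (y - p i)) (h0 : ∀ y, 0 ≤ h y)
    (a : ℂ) (T : ℝ) (hT : ∀ y, T ≤ ‖y - a‖ → h y = 0) (ε : ℝ) (hε : 0 < ε)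
    (hsub : ∀ x, ‖x - a‖ < T → ∀ δ, 0 < δ → δ ≤ ε → ψ x ≤ ⨍ y in ball x δ, ψ y) :
    0 ≤ ∑ i, c i * ⨍ y in ball (p i) (r i), ψ y := by
  have hhc : Continuous h := by
    rw [funext hh]
    have := fun s => EE_cont s
    fun_prop
  obtain ⟨C, hC⟩ : ∃ C, ∀ x, |h x| ≤ C := by
    obtain ⟨C, hC⟩ := (isCompact_closedBall a T).exists_bound_of_continuousOn hhc.continuousOn
    refine ⟨max C 0, fun x => ?_⟩
    by_cases hx : T ≤ ‖x - a‖
    · simp [hT x hx]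
    · exact (hC x (by rw [mem_closedBall, dist_eq_norm]; linarith)).trans (le_max_left _ _)
  have hl := L3 ψ hψ Y hY c r p hr h hh
  have i : ∀ v, Integrable fun x => ψ x * h (x - v) := fun v =>
    hψ.mul_bdd (c := C) (by fun_prop) (Filter.Eventually.of_forall fun x => hC _)
  have := L2 (fun v => ∫ x, ψ x * h (x - v)) (G_cont ψ h hψ hhc C hC) ε hε ?_ _ (hl.congr ?_)
  · have hp := Real.pi_pos
    exact nonneg_of_mul_nonneg_right this (by positivity)
  · intro δ hδ hδε
    simp only [sub_zero]
    apply L1 ψ h hψ hhc C hC h0 δ hδ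
    intro x hx
    exact hsub x (by by_contra hc; exact hx (hT x (not_lt.1 hc))) δ hδ hδε
  · intro v
    have i0 : Integrable fun x => ψ x * h (x - 0) := i 0
    have i4 : Integrable (fun x => ψ x * h (x - v) + ψ x * h (x - Complex.I * v)
        + ψ x * h (x - (-v)) + ψ x * h (x - (-(Complex.I * v)))) :=
      (((i _).add (i _)).add (i _)).add (i _)
    rw [← integral_const_mul, ← int4 _ _ _ _ _ (i _) (i _) (i _) (i _),
      ← integral_sub i4 (i0.const_mul 4), ← integral_div]
    congr 1
    funext x
    simp only [QQ, sub_zero]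
    ring

lemma EE_far (s : ℝ) (hs : 0 < s) (z : ℂ) (hz : s ≤ ‖z‖) : EE s z = Real.log ‖z‖ := by
  have : 0 < ‖z‖ := by linarith
  unfold EE FF
  rw [if_neg, Real.log_div (by positivity) (by positivity), Real.log_pow, Real.log_pow]
  · push_cast; ring
  · rw [div_lt_one (by positivity)]
    push Not
    gcongr

lemma FF_le (t : ℝ) : FF t ≤ (t - 1) / 2 := by
  unfold FF
  split_ifs with h
  · exact le_rfl
  · have := Real.log_le_sub_one_of_pos (show 0 < t by linarith)
    linarith

lemma log_le_FF (t : ℝ) (ht : 0 < t) : Real.log t / 2 ≤ FF t := by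
  unfold FF
  split_ifs with h
  · have := Real.log_le_sub_one_of_pos ht
    linarith
  · exact le_rfl

lemma log_le_EE (s : ℝ) (hs : 0 < s) (z : ℂ) (hz : 0 < ‖z‖) : Real.log ‖z‖ ≤ EE s z := by
  have := log_le_FF (‖z‖^2/s^2) (by positivity)
  rw [Real.log_div (by positivity) (by positivity), Real.log_pow, Real.log_pow] at this
  push_cast at this
  unfold EE
  linarith

lemma FF_lip (a b : ℝ) (ha : 0 ≤ a) (hb : 0 ≤ b) : FF (a^2) - FF (b^2) ≤ |a - b| := by
  have main : ∀ a b : ℝ, 0 ≤ b → b ≤ a → FF (a^2) - FF (b^2) ≤ a - b := by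
    intro a b hb hab
    unfold FF
    split_ifs with h1 h2 h2
    · have ha1 : a < 1 := by nlinarith
      nlinarith
    · nlinarith
    · have ha1 : 1 ≤ a := by nlinarith
      have := Real.log_le_sub_one_of_pos (show 0 < a by linarith)
      rw [Real.log_pow]; push_cast
      have hb1 : b < 1 := by nlinarith
      nlinarith
    · have ha1 : 1 ≤ a := by nlinarith
      have hb1 : 1 ≤ b := by nlinarith
      have := Real.log_le_sub_one_of_pos (show 0 < a / b by positivity)
      rw [Real.log_div (by linarith) (by linarith)] at this
      rw [Real.log_pow, Real.log_pow]; push_cast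
      have h3 : a / b - 1 ≤ a - b := by
        rw [div_sub_one (by linarith)]
        exact div_le_self (by linarith) hb1
      linarith
  have mono : ∀ a b : ℝ, 0 ≤ a → a ≤ b → FF (a^2) - FF (b^2) ≤ 0 := by
    intro a b ha hab
    unfold FF
    have hsq : a^2 ≤ b^2 := by gcongr
    split_ifs with h1 h2 h2
    · linarith
    · have := Real.log_nonneg (not_lt.1 h2)
      linarith
    · linarith
    · have := Real.log_le_log (by linarith) hsq
      linarith
  rcases le_total b a with h | h
  · rw [abs_of_nonneg (by linarith)]; exact main a b hb h
  · exact (mono a b ha h).trans (abs_nonneg _)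

lemma EE_lip (s : ℝ) (hs : 0 < s) (y z : ℂ) (h : ‖y - z‖ ≤ s) : EE s y - EE s z ≤ 1 := by
  have := FF_lip (‖y‖/s) (‖z‖/s) (by positivity) (by positivity)
  unfold EE
  rw [div_pow, div_pow, ← sub_div, abs_div, abs_of_pos hs] at this
  have h2 := abs_norm_sub_norm_le y z
  have h3 : |‖y‖ - ‖z‖| / s ≤ 1 := by rw [div_le_one hs]; linarith
  linarith

lemma Phi_nonneg (ρ : ℝ) (hρ : 0 < ρ) (z : ℂ) : 0 ≤ EE (4*ρ) z - EE (2*ρ) z := by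
  by_cases h : 2*ρ ≤ ‖z‖
  · rw [EE_far (2*ρ) (by linarith) z h]
    have := log_le_EE (4*ρ) (by linarith) z (by linarith)
    linarith
  · push Not at h
    have h1 := norm_nonneg z
    unfold EE FF
    rw [if_pos, if_pos]
    · have : Real.log (4*ρ) = Real.log 2 + Real.log (2*ρ) := by
        rw [← Real.log_mul (by norm_num) (by positivity)]; ring_nf
      have h2 := Real.log_two_gt_d9
      have h3 : ‖z‖^2/(2*ρ)^2 ≤ 1 := by rw [div_le_one (by positivity)]; gcongr
      have h4 : ‖z‖^2/(4*ρ)^2 = ‖z‖^2/(2*ρ)^2 / 4 := by field_simp; norm_num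
      linarith
    · rw [div_lt_one (by positivity)]; gcongr
    · rw [div_lt_one (by positivity)]; gcongr; linarith

lemma Phi_lower (ρ : ℝ) (hρ : 0 < ρ) (z : ℂ) (h : ‖z‖ ≤ 2 * ρ) : 1/5 ≤ EE (4*ρ) z - EE (2*ρ) z := by
  have h1 := norm_nonneg z
  have h5 := FF_le (‖z‖^2/(2*ρ)^2)
  have h6 : FF (‖z‖^2/(4*ρ)^2) = (‖z‖^2/(4*ρ)^2 - 1) / 2 := by
    unfold FF
    rw [if_pos]
    rw [div_lt_one (by positivity)]; gcongr; linarith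
  unfold EE
  have : Real.log (4*ρ) = Real.log 2 + Real.log (2*ρ) := by
    rw [← Real.log_mul (by norm_num) (by positivity)]; ring_nf
  have h2 := Real.log_two_gt_d9
  have h3 : ‖z‖^2/(2*ρ)^2 ≤ 1 := by rw [div_le_one (by positivity)]; gcongr
  have h4 : ‖z‖^2/(4*ρ)^2 = ‖z‖^2/(2*ρ)^2 / 4 := by field_simp; norm_num
  linarith

lemma compare (R : ℝ) (hR : 0 < R) (ψ : ℂ → ℝ) (hsub : SubhC ψ (ball (0 : ℂ) (2 * R)))
    (hint : IntegrableOn ψ (ball (0 : ℂ) (2 * R))) (ρ : ℝ) (hρ : ρ = R / 8)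
    (a x : ℂ) (s : ℝ) (hs : 0 < s) (hsρ : s ≤ ρ) (ha : ‖a‖ < R) (hxR : ‖x‖ < R) (hx : ‖x - a‖ < s) :
    (⨍ y in ball x s, ψ y) - (⨍ y in ball a s, ψ y) ≤ (⨍ y in ball x ρ, ψ y) - (⨍ y in ball a ρ, ψ y)
      + 10 * ((⨍ y in ball a (4*ρ), ψ y) - (⨍ y in ball a (2*ρ), ψ y)) := by
  have hρ0 : 0 < ρ := by linarith
  set U := ball (0:ℂ) (2*R) with hU
  let ψ0 := U.indicator ψ
  have hψ0 : Integrable ψ0 := (integrable_indicator_iff measurableSet_ball).2 hint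
  have hav : ∀ (p : ℂ) (t : ℝ), ‖p‖ + t ≤ 2 * R → ⨍ y in ball p t, ψ0 y = ⨍ y in ball p t, ψ y := by
    intro p t hpt
    rw [setAverage_eq, setAverage_eq]
    congr 1
    apply setIntegral_congr_fun measurableSet_ball
    intro y hy
    apply Set.indicator_of_mem
    exact ball_subset_ball' (by simpa [add_comm] using hpt) hy
  have k := key ψ0 hψ0 (2*R) ?_ ![1,-1,-1,1,10,-10] ![s,ρ,s,ρ,4*ρ,2*ρ] ![a,a,x,x,a,a] ?_
    (fun y => ((EE s (y - a) - EE ρ (y - a)) - (EE s (y - x) - EE ρ (y - x))) + 10 * (EE (4*ρ) (y-a) - EE (2*ρ) (y-a)))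
    ?_ ?_ a (4*ρ) ?_ (R/4) (by linarith) ?_
  · simp only [Fin.sum_univ_succ] at k
    simp at k
    rw [hav a s (by linarith), hav a ρ (by linarith), hav x s (by linarith), hav x ρ (by linarith),
      hav a (4*ρ) (by linarith), hav a (2*ρ) (by linarith)] at k
    linarith
  · intro y hy
    apply Set.indicator_of_notMem
    simp [hU, hy]
  · intro i
    fin_cases i <;> simp <;> linarith
  · intro y
    simp only [Fin.sum_univ_succ]
    simp
    ring
  · intro y
    have hp := Phi_nonneg ρ hρ0 (y - a)
    by_cases h : ‖y - a‖ ≤ 2 * ρ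
    · have h1 := Phi_lower ρ hρ0 (y - a) h
      have h2 := EE_lip s hs (y - x) (y - a) (by
        rw [show y - x - (y - a) = -(x - a) by ring, norm_neg]; exact hx.le)
      have h3 := EE_lip ρ hρ0 (y - a) (y - x) (by
        rw [show y - a - (y - x) = (x - a) by ring]; linarith)
      linarith
    · push Not at h
      have h1 : ρ ≤ ‖y - x‖ := by
        have := norm_sub_norm_le (y - a) (x - a)
        rw [show y - a - (x - a) = y - x by ring] at this
        linarith
      have e1 := EE_far s hs (y - a) (by linarith)
      have e2 := EE_far ρ hρ0 (y - a) (by linarith)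
      have e3 := EE_far s hs (y - x) (by linarith)
      have e4 := EE_far ρ hρ0 (y - x) (by linarith)
      rw [e1, e2, e3, e4]
      linarith
  · intro y h
    have h1 : ρ ≤ ‖y - x‖ := by
      have := norm_sub_norm_le (y - a) (x - a)
      rw [show y - a - (x - a) = y - x by ring] at this
      linarith
    have e1 := EE_far s hs (y - a) (by linarith)
    have e2 := EE_far ρ hρ0 (y - a) (by linarith)
    have e3 := EE_far s hs (y - x) (by linarith)
    have e4 := EE_far ρ hρ0 (y - x) (by linarith)
    have e5 := EE_far (4*ρ) (by linarith) (y - a) (by linarith)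
    have e6 := EE_far (2*ρ) (by linarith) (y - a) (by linarith)
    rw [e1, e2, e3, e4, e5, e6]
    ring
  · intro y hy δ hδ hδR
    have hyn : ‖y‖ < 3 * R / 2 := by
      have := norm_sub_norm_le y a
      linarith
    have hyU : y ∈ U := by rw [hU, mem_ball_zero_iff]; linarith
    rw [hav y δ (by linarith)]
    have : ψ0 y = ψ y := Set.indicator_of_mem hyU _
    rw [this]
    apply hsub.2 y hyU δ hδ
    apply closedBall_subset_ball'
    rw [dist_zero_right]
    linarith

/-- There is `C = C_α > 0` such that for every `R > 0`, every negative
subharmonic `ψ` integrable on `B_{2R} ⊆ ℂ`, and every disk `B ⊆ B_R`,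
`⨍_B |ψ − ψ_B| ≤ C ⨍_{B_{3R/2}} (1+|ψ|)^α` (the right side taken in `[0,∞]`). -/
theorem stmt_10 (α : ℝ) (hα : 1 < α) :
    ∃ C > (0 : ℝ), ∀ R > (0 : ℝ), ∀ ψ : ℂ → ℝ,
      SubhC ψ (ball (0 : ℂ) (2 * R)) →
      (∀ z ∈ ball (0 : ℂ) (2 * R), ψ z < 0) →
      IntegrableOn ψ (ball (0 : ℂ) (2 * R)) →
      ∀ (a : ℂ) (s : ℝ), 0 < s → ball a s ⊆ ball (0 : ℂ) R →
        ENNReal.ofReal (⨍ z in ball a s, |ψ z - ⨍ w in ball a s, ψ w|) ≤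
          ENNReal.ofReal C * ⨍⁻ z in ball (0 : ℂ) (3 * R / 2), ENNReal.ofReal ((1 + |ψ z|) ^ α) ∂volume := by
  refine ⟨1008, by norm_num, ?_⟩
  intro R hR ψ hsub hneg hint a s hs hB
  have hπ := Real.pi_pos
  have hV : ball (0:ℂ) (3*R/2) ⊆ ball 0 (2*R) := ball_subset_ball (by linarith)
  have hiV : IntegrableOn ψ (ball (0:ℂ) (3*R/2)) := hint.mono_set hV
  set A := ⨍ z in ball (0:ℂ) (3*R/2), |ψ z| with hA
  have step1 : ENNReal.ofReal A ≤ ⨍⁻ z in ball (0 : ℂ) (3 * R / 2), ENNReal.ofReal ((1 + |ψ z|) ^ α) ∂volume := by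
    rw [hA, ofReal_setAverage hiV.abs (Filter.Eventually.of_forall fun z => abs_nonneg _), setLAverage_eq]
    gcongr with z
    calc |ψ z| ≤ 1 + |ψ z| := by linarith
      _ = (1 + |ψ z|)^(1:ℝ) := by simp
      _ ≤ _ := Real.rpow_le_rpow_of_exponent_le (by linarith [abs_nonneg (ψ z)]) hα.le
  suffices h : (⨍ z in ball a s, |ψ z - ⨍ w in ball a s, ψ w|) ≤ 1008 * A by
    calc _ ≤ ENNReal.ofReal (1008 * A) := ENNReal.ofReal_le_ofReal h
      _ = ENNReal.ofReal 1008 * ENNReal.ofReal A := ENNReal.ofReal_mul (by norm_num)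
      _ ≤ _ := by gcongr
  set I := ∫ z in ball (0:ℂ) (3*R/2), |ψ z| with hI
  have hI0 : 0 ≤ I := integral_nonneg fun z => abs_nonneg _
  have hAI : I = A * (π * (3*R/2)^2) := by
    rw [hA, setAverage_eq, vol_real _ _ (by linarith), smul_eq_mul]
    field_simp
    rfl
  have hA0 : 0 ≤ A := by
    by_contra hc
    push Not at hc
    have : 0 < π * (3*R/2)^2 := by positivity
    nlinarith
  have hav : ∀ (p : ℂ) (t : ℝ), 0 < t → ball p t ⊆ ball 0 (3*R/2) → ⨍ y in ball p t, |ψ y| ≤ A * ((9/4) * R^2 / t^2) := by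
    intro p t ht hp
    have h1 : ∫ y in ball p t, |ψ y| ≤ I :=
      setIntegral_mono_set hiV.abs (Filter.Eventually.of_forall fun z => abs_nonneg _) (Filter.Eventually.of_forall hp)
    rw [setAverage_eq, vol_real _ _ ht, smul_eq_mul, inv_mul_le_iff₀ (by positivity)]
    refine h1.trans (le_of_eq ?_)
    rw [hAI]
    field_simp
    ring
  have habs : ∀ (p : ℂ) (t : ℝ), |⨍ y in ball p t, ψ y| ≤ ⨍ y in ball p t, |ψ y| := by
    intro p t
    rw [setAverage_eq, setAverage_eq, smul_eq_mul, smul_eq_mul, abs_mul, abs_of_nonneg (by positivity)]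
    gcongr
    exact abs_integral_le_integral_abs
  have hB' : ball a s ⊆ ball 0 (3*R/2) := hB.trans (ball_subset_ball (by linarith))
  have hiB : IntegrableOn ψ (ball a s) := hiV.mono_set hB'
  set m := ⨍ w in ball a s, ψ w with hm
  have hVs : volume.real (ball a s) = π * s^2 := vol_real _ _ hs
  have hVp : 0 < π * s^2 := by positivity
  have hmI : ∫ w in ball a s, ψ w = π * s^2 * m := by
    rw [hm, setAverage_eq, hVs, smul_eq_mul]; field_simp
  have hfin : volume (ball a s) ≠ ⊤ := measure_ball_lt_top.ne
  have hic : ∀ c : ℝ, IntegrableOn (fun _ : ℂ => c) (ball a s) := fun c => integrableOn_const hfin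
  have hid : IntegrableOn (fun z => |ψ z - m|) (ball a s) := (hiB.sub (hic m)).abs
  by_cases hsR : R / 8 < s
  · have h1 : ∫ z in ball a s, |ψ z - m| ≤ ∫ z in ball a s, (|ψ z| + |m|) :=
      setIntegral_mono hid (hiB.abs.add (hic _)) (fun z => abs_sub _ _)
    rw [integral_add hiB.abs (hic _), setIntegral_const, hVs, smul_eq_mul] at h1
    have h2 := hav a s hs hB'
    have h3 := habs a s
    rw [← hm] at h3
    have h4 : ∫ z in ball a s, |ψ z| = π * s^2 * ⨍ z in ball a s, |ψ z| := by
      rw [setAverage_eq, hVs, smul_eq_mul]; field_simp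
    rw [h4] at h1
    have h5 : (9/4) * R^2 / s^2 ≤ 144 := by
      rw [div_le_iff₀ (by positivity)]
      nlinarith
    rw [setAverage_eq, hVs, smul_eq_mul, inv_mul_le_iff₀ hVp]
    refine h1.trans ?_
    rw [← mul_add]
    gcongr
    nlinarith
  · push Not at hsR
    have ha : ‖a‖ < R := by simpa using hB (mem_ball_self hs)
    have hup : ∀ x ∈ ball a s, ψ x - m ≤ 504 * A := by
      intro x hx
      have hxR : ‖x‖ < R := by simpa using hB hx
      have hxa : ‖x - a‖ < s := by simpa [dist_eq_norm] using hx
      have hc := compare R hR ψ hsub hint (R/8) rfl a x s hs hsR ha hxR hxa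
      have h1 : ψ x ≤ ⨍ y in ball x s, ψ y := by
        apply hsub.2 x (by rw [mem_ball_zero_iff]; linarith) s hs
        apply closedBall_subset_ball'
        rw [dist_zero_right]; linarith
      have hnp : ∀ (p : ℂ) (t : ℝ), ‖p‖ + t ≤ 2 * R → ⨍ y in ball p t, ψ y ≤ 0 := by
        intro p t hpt
        rw [setAverage_eq, smul_eq_mul]
        apply mul_nonpos_of_nonneg_of_nonpos (by positivity)
        apply setIntegral_nonpos measurableSet_ball
        intro y hy
        exact (hneg y (ball_subset_ball' (by simpa [add_comm] using hpt) hy)).le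
      have n1 := hnp x (R/8) (by linarith)
      have n2 := hnp a (4*(R/8)) (by linarith)
      have b1 := hav a (R/8) (by linarith) (ball_subset_ball' (by rw [dist_zero_right]; linarith))
      have b2 := hav a (2*(R/8)) (by linarith) (ball_subset_ball' (by rw [dist_zero_right]; linarith))
      have c1 := neg_abs_le (⨍ y in ball a (R/8), ψ y)
      have c2 := neg_abs_le (⨍ y in ball a (2*(R/8)), ψ y)
      have d1 := habs a (R/8)
      have d2 := habs a (2*(R/8))
      have e1 : (9/4) * R^2 / (R/8)^2 = 144 := by field_simp; norm_num
      have e2 : (9/4) * R^2 / (2*(R/8))^2 = 36 := by field_simp; norm_num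
      rw [e1] at b1
      rw [e2] at b2
      linarith
    have h1 : ∫ z in ball a s, |ψ z - m| ≤ ∫ z in ball a s, (1008 * A + m - ψ z) := by
      apply setIntegral_mono_on hid ((hic _).sub hiB) measurableSet_ball
      intro z hz
      have := hup z hz
      simp only [Pi.sub_apply]
      rw [abs_le]; constructor <;> linarith
    rw [integral_sub (hic _) hiB, setIntegral_const, hVs, hmI, smul_eq_mul] at h1
    rw [setAverage_eq, hVs, smul_eq_mul, inv_mul_le_iff₀ hVp]
    linarith
end
end
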